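/- arXiv:2303.03085 — 3 statements merged into one kernel-verified Lean document; each statement's English description precedes it below -/
import Mathlib

section
/- Discrete volume-difference identity (Lemma 3.1 of the paper). Let X⁰, X¹ : [0,1] → ℝ² be continuous, piecewise C¹ curves whose first components vanish at the endpoints, i.e. X⁰(α)·e₁ = X¹(α)·e₁ = 0 for α ∈ {0,1}. Then M(X¹) − M(X⁰) = 2π ∫₀¹ (X¹(α) − X⁰(α)) · f(α) dα. -/
/-
Discrete volume-difference identity (Lemma 3.1).
M(X¹) − M(X⁰) = 2π ∫₀¹ (X¹ − X⁰) · f dα, where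
M(X) := −π ∫₀¹ (X·e₁)² (X_α·e₂) dα and
f := −(1/6)[(X⁰·e₁)X⁰_α + 4(X^{1/2}·e₁)X^{1/2}_α + (X¹·e₁)X¹_α]^⊥.
-/

/-!
Write `X⁰ = (a, u)`, `X¹ = (b, v)`. The bracket in the definition of `f` is
`(2a + b) X⁰_α + (a + 2b) X¹_α`, whose first component is `(a² + ab + b²)_α`. Expanding gives the
pointwise identity
`-(b² v_α - a² u_α) - 2 (X¹ - X⁰) · f = -(1/3) ((v - u) (a² + ab + b²))_α`
away from finitely many points. The function `(v - u) (a² + ab + b²)` is continuous on `[0,1]` and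
vanishes at both endpoints, because `a` and `b` do, so by the fundamental theorem of calculus
the right-hand side integrates to zero.
-/

open MeasureTheory Set

noncomputable section

/-- Euclidean dot product on ℝ². -/
def dot (v w : ℝ × ℝ) : ℝ := v.1 * w.1 + v.2 * w.2

/-- Clockwise rotation by π/2: (v₁,v₂) ↦ (v₂,−v₁). -/
def perp (v : ℝ × ℝ) : ℝ × ℝ := (v.2, -v.1)

/-- `X` is a continuous, piecewise `C¹` curve on `[0,1]` with derivative `X'`. -/
structure PiecewiseC1 (X X' : ℝ → ℝ × ℝ) : Prop where
  cont : ContinuousOn X (Set.Icc 0 1)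
  hasDeriv : ∃ s : Finset ℝ, ∀ α ∈ Set.Icc (0:ℝ) 1 \ (s : Set ℝ), HasDerivAt X (X' α) α
  bdd : ∃ C : ℝ, ∀ α ∈ Set.Icc (0:ℝ) 1, ‖X' α‖ ≤ C
  integrable : IntervalIntegrable X' MeasureTheory.volume 0 1

/-- Enclosed volume of the surface of revolution generated by the curve `X`
(with derivative `X'`) about the second coordinate axis. -/
def Mvol (X X' : ℝ → ℝ × ℝ) : ℝ :=
  -Real.pi * ∫ α in (0:ℝ)..1, ((X α).1) ^ 2 * (X' α).2

/-- The time-weighted discrete normal `f` built from two curves. -/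
def fwt (X0 X0' X1 X1' : ℝ → ℝ × ℝ) (α : ℝ) : ℝ × ℝ :=
  (-(1 / 6 : ℝ)) • perp
    ((X0 α).1 • X0' α
      + (4 : ℝ) • ((((1 / 2 : ℝ) • (X0 α + X1 α)).1) • ((1 / 2 : ℝ) • (X0' α + X1' α)))
      + (X1 α).1 • X1' α)

namespace PiecewiseC1

variable {X X' : ℝ → ℝ × ℝ}

theorem integrable_mul_fst (h : PiecewiseC1 X X') {g : ℝ → ℝ} (hg : ContinuousOn g (Icc 0 1)) :
    IntervalIntegrable (fun α => g α * (X' α).1) volume 0 1 := by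
  have h' : IntervalIntegrable (fun α => (X' α).1) volume 0 1 :=
    ⟨h.integrable.1.fst, h.integrable.2.fst⟩
  exact h'.continuousOn_mul (by rwa [uIcc_of_le zero_le_one])

theorem integrable_mul_snd (h : PiecewiseC1 X X') {g : ℝ → ℝ} (hg : ContinuousOn g (Icc 0 1)) :
    IntervalIntegrable (fun α => g α * (X' α).2) volume 0 1 := by
  have h' : IntervalIntegrable (fun α => (X' α).2) volume 0 1 :=
    ⟨h.integrable.1.snd, h.integrable.2.snd⟩
  exact h'.continuousOn_mul (by rwa [uIcc_of_le zero_le_one])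

end PiecewiseC1

/-- The integral of the derivative of `(v - u) (a² + ab + b²)`, where `X0 = (a, u)`, `X1 = (b, v)`,
vanishes. The derivative is grouped as a combination of the four components of `X0'`, `X1'`. -/
theorem integral_boundary_term {X0 X0' X1 X1' : ℝ → ℝ × ℝ}
    (h0 : PiecewiseC1 X0 X0') (h1 : PiecewiseC1 X1 X1')
    (hend : ∀ α ∈ ({0, 1} : Set ℝ), (X0 α).1 = 0 ∧ (X1 α).1 = 0) :
    IntervalIntegrable (fun α =>
      (((X1 α).2 - (X0 α).2) * (2 * (X0 α).1 + (X1 α).1)) * (X0' α).1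
      + (((X1 α).2 - (X0 α).2) * ((X0 α).1 + 2 * (X1 α).1)) * (X1' α).1
      + ((X0 α).1 ^ 2 + (X0 α).1 * (X1 α).1 + (X1 α).1 ^ 2) * (X1' α).2
      - ((X0 α).1 ^ 2 + (X0 α).1 * (X1 α).1 + (X1 α).1 ^ 2) * (X0' α).2) volume 0 1 ∧
    ∫ α in (0:ℝ)..1,
      ((((X1 α).2 - (X0 α).2) * (2 * (X0 α).1 + (X1 α).1)) * (X0' α).1
      + (((X1 α).2 - (X0 α).2) * ((X0 α).1 + 2 * (X1 α).1)) * (X1' α).1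
      + ((X0 α).1 ^ 2 + (X0 α).1 * (X1 α).1 + (X1 α).1 ^ 2) * (X1' α).2
      - ((X0 α).1 ^ 2 + (X0 α).1 * (X1 α).1 + (X1 α).1 ^ 2) * (X0' α).2) = 0 := by
  have c0 := h0.cont
  have c1 := h1.cont
  have hi := (((h0.integrable_mul_fst
      (g := fun α => ((X1 α).2 - (X0 α).2) * (2 * (X0 α).1 + (X1 α).1)) (by fun_prop)).add
    (h1.integrable_mul_fst
      (g := fun α => ((X1 α).2 - (X0 α).2) * ((X0 α).1 + 2 * (X1 α).1)) (by fun_prop))).add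
    (h1.integrable_mul_snd
      (g := fun α => (X0 α).1 ^ 2 + (X0 α).1 * (X1 α).1 + (X1 α).1 ^ 2) (by fun_prop))).sub
    (h0.integrable_mul_snd
      (g := fun α => (X0 α).1 ^ 2 + (X0 α).1 * (X1 α).1 + (X1 α).1 ^ 2) (by fun_prop))
  refine ⟨hi, ?_⟩
  obtain ⟨s0, hs0⟩ := h0.hasDeriv
  obtain ⟨s1, hs1⟩ := h1.hasDeriv
  rw [integral_eq_of_hasDerivAt_off_countable_of_le
    (fun α => ((X1 α).2 - (X0 α).2) * ((X0 α).1 ^ 2 + (X0 α).1 * (X1 α).1 + (X1 α).1 ^ 2)) _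
    zero_le_one (s := (s0 ∪ s1 : Set ℝ)) (s0.countable_toSet.union s1.countable_toSet)
    (by fun_prop) ?_ hi]
  · obtain ⟨ha, hb⟩ := hend 0 (by simp)
    obtain ⟨ha', hb'⟩ := hend 1 (by simp)
    simp [ha, hb, ha', hb']
  · rintro α ⟨hα, hαs⟩
    have d0 := hs0 α ⟨Ioo_subset_Icc_self hα, fun h => hαs (Or.inl h)⟩
    have d1 := hs1 α ⟨Ioo_subset_Icc_self hα, fun h => hαs (Or.inr h)⟩
    have da : HasDerivAt (fun x => (X0 x).1) (X0' α).1 α :=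
      (ContinuousLinearMap.fst ℝ ℝ ℝ).hasFDerivAt.comp_hasDerivAt α d0
    have du : HasDerivAt (fun x => (X0 x).2) (X0' α).2 α :=
      (ContinuousLinearMap.snd ℝ ℝ ℝ).hasFDerivAt.comp_hasDerivAt α d0
    have db : HasDerivAt (fun x => (X1 x).1) (X1' α).1 α :=
      (ContinuousLinearMap.fst ℝ ℝ ℝ).hasFDerivAt.comp_hasDerivAt α d1
    have dv : HasDerivAt (fun x => (X1 x).2) (X1' α).2 α :=
      (ContinuousLinearMap.snd ℝ ℝ ℝ).hasFDerivAt.comp_hasDerivAt α d1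
    refine ((dv.sub du).mul (((da.pow 2).add (da.mul db)).add (db.pow 2))).congr_deriv ?_
    simp only [Pi.add_apply, Pi.sub_apply, Pi.mul_apply, Pi.pow_apply]
    push_cast
    ring

theorem discrete_volume_difference
    (X0 X0' X1 X1' : ℝ → ℝ × ℝ)
    (h0 : PiecewiseC1 X0 X0') (h1 : PiecewiseC1 X1 X1')
    (hend : ∀ α ∈ ({0, 1} : Set ℝ), (X0 α).1 = 0 ∧ (X1 α).1 = 0) :
    Mvol X1 X1' - Mvol X0 X0' =
      2 * Real.pi * ∫ α in (0:ℝ)..1, dot (X1 α - X0 α) (fwt X0 X0' X1 X1' α) := by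
  have hM0 := h0.integrable_mul_snd (g := fun α => (X0 α).1 ^ 2) (by have := h0.cont; fun_prop)
  have hM1 := h1.integrable_mul_snd (g := fun α => (X1 α).1 ^ 2) (by have := h1.cont; fun_prop)
  obtain ⟨hB, hB0⟩ := integral_boundary_term h0 h1 hend
  have key : ∀ α, dot (X1 α - X0 α) (fwt X0 X0' X1 X1' α) =
      (1 / 2 : ℝ) * ((X0 α).1 ^ 2 * (X0' α).2 - (X1 α).1 ^ 2 * (X1' α).2)
      + (1 / 6 : ℝ) *
      ((((X1 α).2 - (X0 α).2) * (2 * (X0 α).1 + (X1 α).1)) * (X0' α).1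
      + (((X1 α).2 - (X0 α).2) * ((X0 α).1 + 2 * (X1 α).1)) * (X1' α).1
      + ((X0 α).1 ^ 2 + (X0 α).1 * (X1 α).1 + (X1 α).1 ^ 2) * (X1' α).2
      - ((X0 α).1 ^ 2 + (X0 α).1 * (X1 α).1 + (X1 α).1 ^ 2) * (X0' α).2) := by
    intro α
    simp only [dot, fwt, perp, Prod.fst_add, Prod.snd_add, Prod.smul_fst, Prod.smul_snd,
      Prod.fst_sub, Prod.snd_sub, smul_eq_mul]
    ring
  simp only [key]
  rw [intervalIntegral.integral_add ((hM0.sub hM1).const_mul _) (hB.const_mul _),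
    intervalIntegral.integral_const_mul, intervalIntegral.integral_const_mul, hB0,
    intervalIntegral.integral_sub hM0 hM1, Mvol, Mvol]
  ring
end
end

section
/- Unconditional energy stability, local estimate (Theorem 4.1, estimate (4.10), with the quadratures realized as exact weighted integrals; the skew-symmetrized convection term 𝒜(ρ, Û; U, U) is omitted since it vanishes identically when the two last arguments coincide). Let R ⊆ [0,∞)×ℝ be measurable (first coordinate r), let ρ, ρ̂, μ : R → [0,∞) be measurable, let γ > 0, Δt > 0 and g : R → ℝ². Let U, Û : R → ℝ² with U weakly differentiable, let P : R → ℝ, let X⁰, X¹ : [0,1] → ℝ² be continuous, piecewise C¹ with X⁰·e₁ ≥ 0 everywhere and X⁰_α ≠ 0 wherever defined, let κ : [0,1] → ℝ, and let v : [0,1] → ℝ² (representing the trace of U along the curve X⁰). Set ν⁰|X⁰_α| := −(X⁰_α)^⊥ and assume all integrals below are finite. Assume: (i) (1/(2Δt)) ∫_R r[(ρU − ρ̂Û)·U + ρ̂(U − Û)·U] + 2∫_R μ r |D_c(U)|² + 2∫_R μ r^{−1} (U·e₁)² − ∫_R P ∇_c·(rU) − γ ∫₀¹ (X⁰·e₁)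 κ (v·ν⁰) |X⁰_α| dα = ∫_R ρ r g·U; (ii) ∫_R P ∇_c·(rU) = 0; (iii) ∫₀¹ (X⁰·e₁) κ ((X¹ − X⁰)·ν⁰) |X⁰_α| dα = Δt ∫₀¹ (X⁰·e₁) κ (v·ν⁰) |X⁰_α| dα; (iv) ∫₀¹ (X⁰·e₁) κ ((X¹ − X⁰)·ν⁰) |X⁰_α| dα + ∫₀¹ ((X¹ − X⁰)·e₁) |X¹_α| dα + ∫₀¹ (X⁰·e₁) (X¹_α·(X¹_α − X⁰_α))/|X⁰_α| dα = 0. Then (1/2) ∫_R r ρ |U|² + γ ∫₀¹ (X¹·e₁)|X¹_α| dα + 2Δt ( ∫_R μ r |D_c(U)|² + ∫_R μ r^{−1}(U·e₁)² ) ≤ (1/2) ∫_R r ρ̂ |Û|² + γ ∫₀¹ (X⁰·e₁)|X⁰_α| dα + Δt ∫_R ρ r g·U. -/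
/-!
Testing the momentum equation with the velocity and multiplying by `Δt` gives an energy balance.
The time-difference term polarizes into the kinetic energy increment plus the nonnegative term
`ρ̂ |U - Û|²` (`kinetic_identity`). The pressure term vanishes, and the advection and curvature
equations turn the surface-tension term into two curve integrals. Those bound the increment of the
surface area from above, pointwise in the parameter (`area_increment_le`), because
`|a| - |b| ≤ a · (a - b) / |b|` for `b ≠ 0` (`nrm_sub_le`).
-/

/-
Unconditional energy stability, local estimate (Theorem 4.1, estimate (4.10)),
with the quadratures realized as exact weighted integrals.
-/

open MeasureTheory Set

noncomputable section

/-- Squared Euclidean norm on ℝ². -/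
def sqv (v : ℝ × ℝ) : ℝ := v.1 ^ 2 + v.2 ^ 2

/-- Euclidean norm on ℝ². -/
def nrm (v : ℝ × ℝ) : ℝ := Real.sqrt (v.1 ^ 2 + v.2 ^ 2)

/-- Squared Frobenius norm of the symmetrized cylindrical gradient
`D_c(U) = (∇_c U + (∇_c U)ᵀ)/2` of a vector field `U` on the meridian halfplane. -/
def DcSq (U : ℝ × ℝ → ℝ × ℝ) (p : ℝ × ℝ) : ℝ :=
  ((fderiv ℝ U p (1, 0)).1) ^ 2 + ((fderiv ℝ U p (0, 1)).2) ^ 2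
    + ((fderiv ℝ U p (1, 0)).2 + (fderiv ℝ U p (0, 1)).1) ^ 2 / 2

/-- `∇_c·(rU) = ∂_r (r U·e₁) + ∂_z (r U·e₂)` for a vector field `U` on the
meridian halfplane, at the point `p = (r,z)`. -/
def divc (U : ℝ × ℝ → ℝ × ℝ) (p : ℝ × ℝ) : ℝ :=
  (U p).1 + p.1 * ((fderiv ℝ U p (1, 0)).1 + (fderiv ℝ U p (0, 1)).2)

theorem sqv_nonneg (w : ℝ × ℝ) : 0 ≤ sqv w := by
  unfold sqv
  positivity

/-- Pointwise polarization: the symmetrized discrete time derivative tested with `u` equals the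
increment of kinetic energy plus the numerical dissipation `ρ̂ |u - û|²`. -/
theorem kinetic_identity (r a b : ℝ) (u w : ℝ × ℝ) :
    r * (dot (a • u - b • w) u + b * dot (u - w) u)
      = r * (a * sqv u) - r * (b * sqv w) + r * (b * sqv (u - w)) := by
  simp only [dot, sqv, Prod.fst_sub, Prod.snd_sub, Prod.smul_fst, Prod.smul_snd, smul_eq_mul]
  ring

theorem nrm_pos {w : ℝ × ℝ} (hw : w ≠ 0) : 0 < nrm w := by
  refine Real.sqrt_pos.2 (lt_of_le_of_ne (by positivity) fun h => hw ?_)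
  have h1 : w.1 = 0 := by nlinarith [sq_nonneg w.1, sq_nonneg w.2]
  have h2 : w.2 = 0 := by nlinarith [sq_nonneg w.1, sq_nonneg w.2]
  exact Prod.ext h1 h2

/-- Cauchy–Schwarz together with `|a| - |b| ≤ (|a|² - |a| |b|) / |b|`, which is `(|a| - |b|)² ≥ 0`.
-/
theorem nrm_sub_le (a b : ℝ × ℝ) (hb : b ≠ 0) :
    nrm a - nrm b ≤ dot a (a - b) / nrm b := by
  have hbpos := nrm_pos hb
  have ha2 : nrm a ^ 2 = a.1 ^ 2 + a.2 ^ 2 := Real.sq_sqrt (by positivity)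
  have hb2 : nrm b ^ 2 = b.1 ^ 2 + b.2 ^ 2 := Real.sq_sqrt (by positivity)
  have hcs : a.1 * b.1 + a.2 * b.2 ≤ nrm a * nrm b := by
    have ha : 0 ≤ nrm a := Real.sqrt_nonneg _
    refine (abs_le_of_sq_le_sq' ?_ (mul_nonneg ha hbpos.le)).2
    rw [mul_pow, ha2, hb2]
    nlinarith [sq_nonneg (a.1 * b.2 - a.2 * b.1)]
  rw [le_div_iff₀ hbpos]
  simp only [dot, Prod.fst_sub, Prod.snd_sub]
  nlinarith [sq_nonneg (nrm a - nrm b)]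

/-- Pointwise bound on the increment of the surface-area density `(X·e₁) |X_α|` by the two
curve terms of the curvature equation. -/
theorem area_increment_le (x y a b : ℝ × ℝ) (hx : 0 ≤ x.1) (ha : a ≠ 0) :
    y.1 * nrm b - x.1 * nrm a ≤ (y - x).1 * nrm b + x.1 * dot b (b - a) / nrm a := by
  have h := mul_le_mul_of_nonneg_left (nrm_sub_le b a ha) hx
  rw [mul_div_assoc, Prod.fst_sub]
  linarith

theorem local_energy_stability
    (R : Set (ℝ × ℝ)) (hR : MeasurableSet R)
    (hRhalf : R ⊆ {p : ℝ × ℝ | 0 ≤ p.1})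
    (ρ ρh μ : ℝ × ℝ → ℝ)
    (hρmeas : Measurable ρ) (hρhmeas : Measurable ρh) (hμmeas : Measurable μ)
    (hρ : ∀ p ∈ R, 0 ≤ ρ p) (hρh : ∀ p ∈ R, 0 ≤ ρh p) (hμ : ∀ p ∈ R, 0 ≤ μ p)
    (γ Δt : ℝ) (hγ : 0 < γ) (hΔt : 0 < Δt)
    (g : ℝ × ℝ → ℝ × ℝ)
    (U Uh : ℝ × ℝ → ℝ × ℝ) (hUdiff : Differentiable ℝ U) (hUhmeas : Measurable Uh)
    (P : ℝ × ℝ → ℝ)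
    (X0 X0' X1 X1' : ℝ → ℝ × ℝ)
    (hPW0 : PiecewiseC1 X0 X0') (hPW1 : PiecewiseC1 X1 X1')
    (hX0pos : ∀ α ∈ Set.Icc (0:ℝ) 1, 0 ≤ (X0 α).1)
    (hX0ne : ∀ α ∈ Set.Icc (0:ℝ) 1, X0' α ≠ 0)
    (κ : ℝ → ℝ) (v : ℝ → ℝ × ℝ)
    -- all integrals appearing below are finite:
    (hint1 : IntegrableOn (fun p => p.1 * (ρ p * sqv (U p))) R)
    (hint2 : IntegrableOn (fun p => p.1 * (ρh p * sqv (Uh p))) R)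
    (hint3 : IntegrableOn (fun p => p.1 * (ρh p * sqv (U p - Uh p))) R)
    (hint4 : IntegrableOn (fun p => μ p * p.1 * DcSq U p) R)
    (hint5 : IntegrableOn (fun p => μ p * (p.1)⁻¹ * ((U p).1) ^ 2) R)
    (hint6 : IntegrableOn (fun p => P p * divc U p) R)
    (hint7 : IntegrableOn (fun p => ρ p * p.1 * dot (g p) (U p)) R)
    (hint8 : IntervalIntegrable
      (fun α => (X0 α).1 * κ α * dot (v α) (-(perp (X0' α)))) volume 0 1)
    (hint9 : IntervalIntegrable
      (fun α => (X0 α).1 * κ α * dot (X1 α - X0 α) (-(perp (X0' α)))) volume 0 1)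
    (hint10 : IntervalIntegrable
      (fun α => ((X1 α - X0 α).1) * nrm (X1' α)) volume 0 1)
    (hint11 : IntervalIntegrable
      (fun α => (X0 α).1 * dot (X1' α) (X1' α - X0' α) / nrm (X0' α)) volume 0 1)
    (hint12 : IntervalIntegrable (fun α => (X1 α).1 * nrm (X1' α)) volume 0 1)
    (hint13 : IntervalIntegrable (fun α => (X0 α).1 * nrm (X0' α)) volume 0 1)
    -- (i): the discrete momentum equation tested with U
    (hi : (1 / (2 * Δt)) * (∫ p in R, p.1 *
            (dot (ρ p • U p - ρh p • Uh p) (U p) + ρh p * dot (U p - Uh p) (U p)))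
        + 2 * (∫ p in R, μ p * p.1 * DcSq U p)
        + 2 * (∫ p in R, μ p * (p.1)⁻¹ * ((U p).1) ^ 2)
        - (∫ p in R, P p * divc U p)
        - γ * (∫ α in (0:ℝ)..1, (X0 α).1 * κ α * dot (v α) (-(perp (X0' α))))
        = ∫ p in R, ρ p * p.1 * dot (g p) (U p))
    -- (ii): the incompressibility equation tested with P
    (hii : (∫ p in R, P p * divc U p) = 0)
    -- (iii): the interface advection equation tested with κ
    (hiii : (∫ α in (0:ℝ)..1, (X0 α).1 * κ α * dot (X1 α - X0 α) (-(perp (X0' α))))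
        = Δt * ∫ α in (0:ℝ)..1, (X0 α).1 * κ α * dot (v α) (-(perp (X0' α))))
    -- (iv): the curvature equation tested with X¹ − X⁰
    (hiv : (∫ α in (0:ℝ)..1, (X0 α).1 * κ α * dot (X1 α - X0 α) (-(perp (X0' α))))
        + (∫ α in (0:ℝ)..1, ((X1 α - X0 α).1) * nrm (X1' α))
        + (∫ α in (0:ℝ)..1, (X0 α).1 * dot (X1' α) (X1' α - X0' α) / nrm (X0' α))
        = 0) :
    (1 / 2) * (∫ p in R, p.1 * (ρ p * sqv (U p)))
        + γ * (∫ α in (0:ℝ)..1, (X1 α).1 * nrm (X1' α))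
        + 2 * Δt * ((∫ p in R, μ p * p.1 * DcSq U p)
          + (∫ p in R, μ p * (p.1)⁻¹ * ((U p).1) ^ 2))
      ≤ (1 / 2) * (∫ p in R, p.1 * (ρh p * sqv (Uh p)))
        + γ * (∫ α in (0:ℝ)..1, (X0 α).1 * nrm (X0' α))
        + Δt * ∫ p in R, ρ p * p.1 * dot (g p) (U p) := by
  -- Polarization identity for the time-difference term.
  have hkin : (∫ p in R, p.1 *
        (dot (ρ p • U p - ρh p • Uh p) (U p) + ρh p * dot (U p - Uh p) (U p)))
      = (∫ p in R, p.1 * (ρ p * sqv (U p))) - (∫ p in R, p.1 * (ρh p * sqv (Uh p)))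
        + ∫ p in R, p.1 * (ρh p * sqv (U p - Uh p)) := by
    have hsub : IntegrableOn
        (fun p => p.1 * (ρ p * sqv (U p)) - p.1 * (ρh p * sqv (Uh p))) R :=
      hint1.sub hint2
    rw [← integral_sub hint1 hint2, ← integral_add hsub hint3]
    congr 1
    funext p
    exact kinetic_identity p.1 (ρ p) (ρh p) (U p) (Uh p)
  have hdiss : 0 ≤ ∫ p in R, p.1 * (ρh p * sqv (U p - Uh p)) := by
    refine setIntegral_nonneg hR fun p hp => ?_
    exact mul_nonneg (hRhalf hp) (mul_nonneg (hρh p hp) (sqv_nonneg _))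
  have harea : (∫ α in (0:ℝ)..1, (X1 α).1 * nrm (X1' α))
        - (∫ α in (0:ℝ)..1, (X0 α).1 * nrm (X0' α))
      ≤ (∫ α in (0:ℝ)..1, ((X1 α - X0 α).1) * nrm (X1' α))
        + (∫ α in (0:ℝ)..1, (X0 α).1 * dot (X1' α) (X1' α - X0' α) / nrm (X0' α)) := by
    rw [← intervalIntegral.integral_sub hint12 hint13,
      ← intervalIntegral.integral_add hint10 hint11]
    refine intervalIntegral.integral_mono_on zero_le_one (hint12.sub hint13)
      (hint10.add hint11) fun α hα => ?_
    exact area_increment_le (X0 α) (X1 α) (X0' α) (X1' α) (hX0pos α hα) (hX0ne α hα)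
  rw [hkin, hii] at hi
  generalize (∫ p in R, p.1 * (ρ p * sqv (U p))) = kinNew at *
  generalize (∫ p in R, p.1 * (ρh p * sqv (Uh p))) = kinOld at *
  generalize (∫ p in R, p.1 * (ρh p * sqv (U p - Uh p))) = kinDiff at *
  generalize (∫ p in R, μ p * p.1 * DcSq U p) = visc at *
  generalize (∫ p in R, μ p * (p.1)⁻¹ * ((U p).1) ^ 2) = hoop at *
  generalize (∫ p in R, ρ p * p.1 * dot (g p) (U p)) = force at *
  generalize (∫ α in (0:ℝ)..1, (X0 α).1 * κ α * dot (v α) (-(perp (X0' α)))) = tension at *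
  have harea' := mul_le_mul_of_nonneg_left harea hγ.le
  rw [hiii] at hiv
  -- The momentum balance multiplied by `Δt`.
  have hi' : (1 / 2) * (kinNew - kinOld + kinDiff) + 2 * Δt * (visc + hoop)
      - γ * (Δt * tension) = Δt * force := by
    rw [← hi]
    field_simp
    ring
  have hiv' := congrArg (fun t => γ * t) hiv
  simp only [mul_add, mul_zero] at hiv'
  linarith
end
end

section
/- Exact volume conservation of the volume-preserving schemes (volume-conservation conclusion (4.17) of Theorem 4.2, equivalently Theorem 4.3). Let X⁰, X¹ : [0,1] → ℝ² be continuous, piecewise C¹ curves whose first components vanish at the endpoints, let Δt > 0, and let v : [0,1] → ℝ² (representing the trace of the discrete fluid velocity along X⁰), with ν⁰|X⁰_α| := −(X⁰_α)^⊥. Assume: (i) (1/Δt) ∫₀¹ (X¹ − X⁰)·f dα = ∫₀¹ (X⁰·e₁) (v·ν⁰) |X⁰_α| dα (the interface-advection equation tested with the constant function 1), and (ii) ∫₀¹ (X⁰·e₁) (v·ν⁰) |X⁰_α| dα = 0 (the weighted-flux condition delivered by the XFEM pressure test function). Then M(X¹) = M(X⁰). -/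
/-!
Along the linear interpolation `X(t) = (1 - t) X⁰ + t X¹`, the time derivative of the volume is
`-2π ∫ r X_t · X_α^⊥` up to the boundary terms of one integration by parts, with `r = X(t)·e₁`.
This expression is quadratic in `t`, so Simpson's rule integrates it exactly, and the Simpson
weights are those of `f`. Carried out pointwise in `α` (`integrand_identity`), this says that
`(X¹·e₁)² X¹_α·e₂ - (X⁰·e₁)² X⁰_α·e₂` is `-2 (X¹ - X⁰)·f` plus the `α`-derivative of
`(X¹ - X⁰)·e₂ * ∫₀¹ r² dt`. That primitive vanishes at both endpoints because `r` does, hence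
`M(X¹) - M(X⁰) = 2π ∫ (X¹ - X⁰)·f`, and the right-hand side is zero by the two hypotheses.
-/

/-
Exact volume conservation of the volume-preserving schemes
(conclusion (4.17) of Theorem 4.2 / Theorem 4.3): under
(i) (1/Δt) ∫₀¹ (X¹ − X⁰)·f dα = ∫₀¹ (X⁰·e₁)(v·ν⁰)|X⁰_α| dα and
(ii) ∫₀¹ (X⁰·e₁)(v·ν⁰)|X⁰_α| dα = 0,
one has M(X¹) = M(X⁰).
-/

open MeasureTheory Set

noncomputable section

/-- The boundary term of the integration by parts, `(X¹ - X⁰)·e₂ * ∫₀¹ ((1-t) r₀ + t r₁)² dt`,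
where `rᵢ = Xⁱ·e₁`; the inner integral is written out as `(r₀² + r₀ r₁ + r₁²) / 3`. -/
def bdryTerm (X0 X1 : ℝ → ℝ × ℝ) (α : ℝ) : ℝ :=
  ((X1 α).2 - (X0 α).2) * (((X0 α).1 ^ 2 + (X0 α).1 * (X1 α).1 + (X1 α).1 ^ 2) / 3)

/-- The formal `α`-derivative of `bdryTerm`, with `X0'`, `X1'` in place of the derivatives of the
curves. -/
def bdryTermDeriv (X0 X0' X1 X1' : ℝ → ℝ × ℝ) (α : ℝ) : ℝ :=
  (((X0 α).1 ^ 2 + (X0 α).1 * (X1 α).1 + (X1 α).1 ^ 2) / 3) * ((X1' α).2 - (X0' α).2)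
    + (((X1 α).2 - (X0 α).2) * (2 * (X0 α).1 + (X1 α).1) / 3) * (X0' α).1
    + (((X1 α).2 - (X0 α).2) * ((X0 α).1 + 2 * (X1 α).1) / 3) * (X1' α).1

/-- Pointwise form of the exactness of Simpson's rule for the volume increment. -/
lemma integrand_identity (X0 X0' X1 X1' : ℝ → ℝ × ℝ) (α : ℝ) :
    dot (X1 α - X0 α) (fwt X0 X0' X1 X1' α) =
      (1 / 2) * (bdryTermDeriv X0 X0' X1 X1' α
        - ((X1 α).1 ^ 2 * (X1' α).2 - (X0 α).1 ^ 2 * (X0' α).2)) := by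
  simp only [dot, fwt, perp, bdryTermDeriv, Prod.fst_add, Prod.snd_add, Prod.fst_sub,
    Prod.snd_sub, Prod.smul_fst, Prod.smul_snd, smul_eq_mul]
  ring

lemma hasDerivAt_bdryTerm {X0 X0' X1 X1' : ℝ → ℝ × ℝ} {α : ℝ}
    (h0 : HasDerivAt X0 (X0' α) α) (h1 : HasDerivAt X1 (X1' α) α) :
    HasDerivAt (bdryTerm X0 X1) (bdryTermDeriv X0 X0' X1 X1' α) α := by
  have a : HasDerivAt (fun x => (X0 x).1) (X0' α).1 α := h0.fst
  have b : HasDerivAt (fun x => (X1 x).1) (X1' α).1 α := h1.fst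
  have y : HasDerivAt (fun x => (X0 x).2) (X0' α).2 α := h0.snd
  have z : HasDerivAt (fun x => (X1 x).2) (X1' α).2 α := h1.snd
  refine ((z.fun_sub y).fun_mul
    ((((a.fun_pow 2).fun_add (a.fun_mul b)).fun_add (b.fun_pow 2)).div_const 3)).congr_deriv ?_
  simp only [bdryTermDeriv]
  push_cast
  ring

theorem exact_volume_conservation
    (X0 X0' X1 X1' : ℝ → ℝ × ℝ)
    (h0 : PiecewiseC1 X0 X0') (h1 : PiecewiseC1 X1 X1')
    (hend : ∀ α ∈ ({0, 1} : Set ℝ), (X0 α).1 = 0 ∧ (X1 α).1 = 0)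
    (Δt : ℝ) (hΔt : 0 < Δt) (v : ℝ → ℝ × ℝ)
    (hadv : (1 / Δt) * (∫ α in (0:ℝ)..1, dot (X1 α - X0 α) (fwt X0 X0' X1 X1' α))
      = ∫ α in (0:ℝ)..1, (X0 α).1 * dot (v α) (-(perp (X0' α))))
    (hflux : (∫ α in (0:ℝ)..1, (X0 α).1 * dot (v α) (-(perp (X0' α)))) = 0) :
    Mvol X1 X1' = Mvol X0 X0' := by
  have hI : uIcc (0 : ℝ) 1 = Icc 0 1 := uIcc_of_le zero_le_one
  have ca : ContinuousOn (fun x => (X0 x).1) (Icc 0 1) := continuous_fst.comp_continuousOn h0.cont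
  have cb : ContinuousOn (fun x => (X1 x).1) (Icc 0 1) := continuous_fst.comp_continuousOn h1.cont
  have cy : ContinuousOn (fun x => (X0 x).2) (Icc 0 1) := continuous_snd.comp_continuousOn h0.cont
  have cz : ContinuousOn (fun x => (X1 x).2) (Icc 0 1) := continuous_snd.comp_continuousOn h1.cont
  have ia : IntervalIntegrable (fun x => (X0' x).1) volume 0 1 :=
    ⟨h0.integrable.1.fst, h0.integrable.2.fst⟩
  have ib : IntervalIntegrable (fun x => (X1' x).1) volume 0 1 :=
    ⟨h1.integrable.1.fst, h1.integrable.2.fst⟩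
  have iy : IntervalIntegrable (fun x => (X0' x).2) volume 0 1 :=
    ⟨h0.integrable.1.snd, h0.integrable.2.snd⟩
  have iz : IntervalIntegrable (fun x => (X1' x).2) volume 0 1 :=
    ⟨h1.integrable.1.snd, h1.integrable.2.snd⟩
  have iV0 : IntervalIntegrable (fun x => (X0 x).1 ^ 2 * (X0' x).2) volume 0 1 :=
    iy.continuousOn_mul (by rw [hI]; fun_prop)
  have iV1 : IntervalIntegrable (fun x => (X1 x).1 ^ 2 * (X1' x).2) volume 0 1 :=
    iz.continuousOn_mul (by rw [hI]; fun_prop)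
  have iD : IntervalIntegrable (bdryTermDeriv X0 X0' X1 X1') volume 0 1 :=
    (((iz.sub iy).continuousOn_mul (by rw [hI]; fun_prop)).add
      (ia.continuousOn_mul (by rw [hI]; fun_prop))).add
      (ib.continuousOn_mul (by rw [hI]; fun_prop))
  have hD : ∫ α in (0:ℝ)..1, bdryTermDeriv X0 X0' X1 X1' α = 0 := by
    obtain ⟨s0, hs0⟩ := h0.hasDeriv
    obtain ⟨s1, hs1⟩ := h1.hasDeriv
    rw [integral_eq_of_hasDerivAt_off_countable_of_le (bdryTerm X0 X1) _ zero_le_one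
      (s0.countable_toSet.union s1.countable_toSet) (by unfold bdryTerm; fun_prop) ?_ iD]
    · simp [bdryTerm, hend 0 (by simp), hend 1 (by simp)]
    · intro x hx
      have hx' := Ioo_subset_Icc_self hx.1
      exact hasDerivAt_bdryTerm (hs0 x ⟨hx', fun h => hx.2 (Or.inl h)⟩)
        (hs1 x ⟨hx', fun h => hx.2 (Or.inr h)⟩)
  have hzero : ∫ α in (0:ℝ)..1, dot (X1 α - X0 α) (fwt X0 X0' X1 X1' α) = 0 :=
    (mul_eq_zero.mp (hadv.trans hflux)).resolve_left (one_div_pos.mpr hΔt).ne'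
  simp only [integrand_identity] at hzero
  rw [intervalIntegral.integral_const_mul, intervalIntegral.integral_sub iD (iV1.sub iV0),
    intervalIntegral.integral_sub iV1 iV0, hD] at hzero
  unfold Mvol
  congr 1
  linarith
end
end
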